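/- Fix an integer d ≥ 1. Let x, x′ ∈ 𝒳_d, y ∈ 𝒴_d(x) and y′ ∈ 𝒴_d(x′). Then xy and x′y′ are conjugate in G if and only if there exists g ∈ G with g⁻¹ x g = x′ and g⁻¹ y g = y′. Consequently G is the disjoint union, over representatives x of the G-conjugacy classes in 𝒳_d and representatives y of the C_G(x)-conjugacy classes in 𝒴_d(x), of the G-conjugacy classes of the elements xy. -/

import Mathlib

open Polynomial

/-- For `g ∈ GL(V)` with `n = dim V`, the subspace `V_g = range((g - 1)^n)`. -/
noncomputable def primaryRange {F V : Type} [Field F] [AddCommGroup V] [Module F V]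
    (g : (Module.End F V)ˣ) : Submodule F V :=
  LinearMap.range (((g : Module.End F V) - 1) ^ Module.finrank F V)

/-- For `g ∈ GL(V)` with `n = dim V`, the subspace `V_g⁰ = ker((g - 1)^n)`. -/
noncomputable def primaryKer {F V : Type} [Field F] [AddCommGroup V] [Module F V]
    (g : (Module.End F V)ˣ) : Submodule F V :=
  LinearMap.ker (((g : Module.End F V) - 1) ^ Module.finrank F V)

/-- The set `𝒳_d` of `d`-elements of `GL(V)`: those `g` fixing `V_g⁰` pointwise such
that every monic irreducible factor of the characteristic polynomial of `g` other
than `X - 1` has degree divisible by `d`. -/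
noncomputable def dElements (F V : Type) [Field F] [AddCommGroup V] [Module F V]
    [FiniteDimensional F V] (d : ℕ) : Set (Module.End F V)ˣ :=
  {g | (∀ v ∈ primaryKer g, (g : Module.End F V) v = v) ∧
    ∀ f : Polynomial F, f.Monic → Irreducible f →
      f ∣ LinearMap.charpoly (g : Module.End F V) → f ≠ X - 1 → d ∣ f.natDegree}

/-- For `x ∈ 𝒳_d`, the set `𝒴_d(x)`: those `y ∈ GL(V)` fixing `V_x` pointwise,
mapping `V_x⁰` into itself, and such that every monic irreducible factor of the
characteristic polynomial of `y` other than `X - 1` has degree not divisible by `d`. -/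
noncomputable def dRegular (F V : Type) [Field F] [AddCommGroup V] [Module F V]
    [FiniteDimensional F V] (d : ℕ) (x : (Module.End F V)ˣ) :
    Set (Module.End F V)ˣ :=
  {y | (∀ v ∈ primaryRange x, (y : Module.End F V) v = v) ∧
    (∀ v ∈ primaryKer x, (y : Module.End F V) v ∈ primaryKer x) ∧
    ∀ f : Polynomial F, f.Monic → Irreducible f →
      f ∣ LinearMap.charpoly (y : Module.End F V) → f ≠ X - 1 → ¬ d ∣ f.natDegree}


/-- An irreducible factor of the characteristic polynomial of an endomorphism divides every
polynomial annihilating that endomorphism. -/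
theorem LinearMap.dvd_of_irreducible_of_dvd_charpoly {F V : Type} [Field F] [AddCommGroup V]
    [Module F V] [FiniteDimensional F V] {φ : Module.End F V} {f A : F[X]} (hf : Irreducible f)
    (hdvd : f ∣ φ.charpoly) (hA : aeval φ A = 0) : f ∣ A := by
  have : Fact (Irreducible f) := ⟨hf⟩
  let K := AdjoinRoot f
  set α : K := AdjoinRoot.root f
  set ψ : Module.End K (TensorProduct F K V) := Module.End.baseChangeHom F K V φ
  have hroot : ψ.charpoly.IsRoot α := by
    have h : ψ.charpoly = φ.charpoly.map (algebraMap F K) := LinearMap.charpoly_baseChange φ K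
    rw [h, IsRoot.def, eval_map_algebraMap]
    obtain ⟨c, hc⟩ := hdvd
    rw [hc, map_mul, AdjoinRoot.aeval_eq, AdjoinRoot.mk_self, zero_mul]
  obtain ⟨v, hv⟩ :=
    ((Module.End.hasEigenvalue_iff_isRoot_charpoly ψ α).2 hroot).exists_hasEigenvector
  have h0 : aeval ψ (A.map (algebraMap F K)) = 0 := by
    rw [aeval_map_algebraMap, aeval_algHom_apply, hA, map_zero]
  have h1 := Module.End.aeval_apply_of_hasEigenvector (p := A.map (algebraMap F K)) hv
  rw [h0, LinearMap.zero_apply, eval_map_algebraMap, AdjoinRoot.aeval_eq] at h1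
  exact AdjoinRoot.mk_eq_zero.1 ((smul_eq_zero.1 h1.symm).resolve_right hv.2)

/-- Two nonzero polynomials whose monic irreducible factors are separated by a predicate are
coprime. -/
theorem Polynomial.isCoprime_of_separated {F : Type} [Field F] {S : F[X] → Prop} {A B : F[X]}
    (hB0 : B ≠ 0)
    (hA : ∀ f : F[X], f.Monic → Irreducible f → f ∣ A → S f)
    (hB : ∀ f : F[X], f.Monic → Irreducible f → f ∣ B → ¬ S f) : IsCoprime A B := by
  classical
  refine isCoprime_of_irreducible_dvd (fun h => hB0 h.2) fun z hz hzA hzB => ?_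
  have hass : Associated (normalize z) z := normalize_associated z
  have hirr : Irreducible (normalize z) := hass.irreducible_iff.2 hz
  have hmon : (normalize z).Monic := monic_normalize hz.ne_zero
  exact hB _ hmon hirr (hass.dvd.trans hzB) (hA _ hmon hirr (hass.dvd.trans hzA))

/-- A nonzero polynomial splits as a product according to a predicate on its monic irreducible
factors. -/
theorem Polynomial.exists_mul_eq_separated {F : Type} [Field F] (S : F[X] → Prop) (p : F[X])
    (hp : p ≠ 0) :
    ∃ A B : F[X], p = A * B ∧ (∀ f : F[X], f.Monic → Irreducible f → f ∣ A → S f) ∧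
      (∀ f : F[X], f.Monic → Irreducible f → f ∣ B → ¬ S f) := by
  classical
  induction p using UniqueFactorizationMonoid.induction_on_prime with
  | h₁ => exact absurd rfl hp
  | h₂ u hu =>
    exact ⟨u, 1, (mul_one u).symm,
      fun f _ hf hfu => absurd (isUnit_of_dvd_unit hfu hu) hf.not_isUnit,
      fun f _ hf hf1 => absurd (isUnit_of_dvd_one hf1) hf.not_isUnit⟩
  | h₃ a r ha hr ih =>
    obtain ⟨A, B, rfl, hA, hB⟩ := ih ha
    have key : ∀ f C : F[X], f.Monic → Irreducible f → f ∣ r * C → f = normalize r ∨ f ∣ C := by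
      intro f C hm hf hd
      refine (hf.prime.dvd_or_dvd hd).imp (fun h => ?_) id
      rw [← hm.normalize_eq_self]
      exact normalize_eq_normalize h (hf.associated_of_dvd hr.irreducible h).symm.dvd
    by_cases hS : S (normalize r)
    · exact ⟨r * A, B, by ring, fun f hm hf hd =>
        (key f A hm hf hd).elim (fun h => h ▸ hS) (hA f hm hf), hB⟩
    · exact ⟨A, r * B, by ring, hA, fun f hm hf hd =>
        (key f B hm hf hd).elim (fun h => h ▸ hS) (hB f hm hf)⟩

/-- Polynomials in two endomorphisms agree on a vector of a submodule on which the two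
endomorphisms agree and which is stable under the first. -/
theorem Module.End.aeval_apply_eq_of_eqOn {F V : Type} [Field F] [AddCommGroup V] [Module F V]
    {φ ψ : Module.End F V} {U : Submodule F V} (hU : ∀ u ∈ U, φ u ∈ U)
    (h : ∀ u ∈ U, φ u = ψ u) (p : F[X]) {u : V} (hu : u ∈ U) :
    aeval φ p u = aeval ψ p u := by
  induction p using Polynomial.induction_on' generalizing u with
  | add p q hp hq => simp [hp hu, hq hu]
  | monomial n a =>
    simp only [aeval_monomial, Module.End.mul_apply]
    congr 1
    induction n generalizing u with
    | zero => rfl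
    | succ n ih =>
      rw [pow_succ, pow_succ, Module.End.mul_apply, Module.End.mul_apply, ih (hU u hu), h u hu]

/-- If `g` intertwines `φ` and `φ'`, it intertwines all polynomials in them. -/
theorem aeval_apply_intertwine {F V : Type} [Field F] [AddCommGroup V] [Module F V]
    {φ φ' g : Module.End F V} (h : ∀ w, φ (g w) = g (φ' w)) (p : F[X]) (w : V) :
    aeval φ p (g w) = g (aeval φ' p w) := by
  induction p using Polynomial.induction_on' generalizing w with
  | add p q hp hq => simp [hp, hq]
  | monomial n a =>
    simp only [aeval_monomial, Module.End.mul_apply, Module.algebraMap_end_apply, map_smul]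
    congr 1
    induction n generalizing w with
    | zero => rfl
    | succ n ih => rw [pow_succ, pow_succ, Module.End.mul_apply, Module.End.mul_apply, h, ih]

/-- A submodule stable under `φ` is stable under polynomials in `φ`. -/
theorem Module.End.aeval_apply_mem_of_stable {F V : Type} [Field F] [AddCommGroup V] [Module F V]
    {φ : Module.End F V} {U : Submodule F V} (hU : ∀ u ∈ U, φ u ∈ U) (p : F[X]) {u : V}
    (hu : u ∈ U) : aeval φ p u ∈ U := by
  induction p using Polynomial.induction_on' with
  | add p q hp hq => simpa using U.add_mem hp hq
  | monomial n a =>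
    simp only [aeval_monomial, Module.End.mul_apply, Module.algebraMap_end_apply]
    refine U.smul_mem a ?_
    induction n with
    | zero => exact hu
    | succ n ih => rw [pow_succ', Module.End.mul_apply]; exact hU _ ih

/-- Let `V = U ⊕ W` with both summands `φ`-stable and `B(φ) = 0` on `W`. If `A` is coprime to `B`,
then the kernel of `A(φ)` lies in `U`. -/
theorem Module.End.mem_of_aeval_eq_zero {F V : Type} [Field F] [AddCommGroup V] [Module F V]
    {φ : Module.End F V} {U W : Submodule F V} (hUW : IsCompl U W) (hU : ∀ u ∈ U, φ u ∈ U)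
    (hW : ∀ w ∈ W, φ w ∈ W) {A B : F[X]} (hAB : IsCoprime A B) (hB : ∀ w ∈ W, aeval φ B w = 0)
    {v : V} (hv : aeval φ A v = 0) : v ∈ U := by
  obtain ⟨u, hu, w, hw, rfl⟩ := Submodule.mem_sup.1
    (hUW.sup_eq_top.ge (Submodule.mem_top : v ∈ ⊤))
  have hAu : aeval φ A u ∈ U := aeval_apply_mem_of_stable hU A hu
  have hAw : aeval φ A w ∈ W := aeval_apply_mem_of_stable hW A hw
  have hAw0 : aeval φ A w = 0 := by
    refine Submodule.disjoint_def.1 hUW.disjoint _ ?_ hAw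
    rw [map_add] at hv
    rw [eq_neg_of_add_eq_zero_right hv]
    exact U.neg_mem hAu
  have hw0 : w = 0 := by
    simpa using (disjoint_ker_aeval_of_isCoprime φ hAB).le_bot ⟨hAw0, hB w hw⟩
  rwa [hw0, add_zero]

/-- `V_x` is stable under `x`. -/
theorem apply_mem_primaryRange {F V : Type} [Field F] [AddCommGroup V] [Module F V]
    {x : (Module.End F V)ˣ} {v : V} (hv : v ∈ primaryRange x) :
    (x : Module.End F V) v ∈ primaryRange x := by
  obtain ⟨w, rfl⟩ := hv
  refine ⟨(x : Module.End F V) w, ?_⟩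
  rw [← Module.End.mul_apply, ← Module.End.mul_apply]
  congr 1
  exact (((Commute.refl (x : Module.End F V)).sub_left (Commute.one_left _)).pow_left _)

/-- The predicate on monic irreducible factors separating `𝒳_d` from `𝒴_d`. -/
def IsDFactor {F : Type} [Field F] (d : ℕ) (f : F[X]) : Prop := f ≠ X - 1 ∧ d ∣ f.natDegree

section Products

variable {F V : Type} [Field F] [AddCommGroup V] [Module F V] [FiniteDimensional F V] {d : ℕ}
  {x y : (Module.End F V)ˣ}

/-- A polynomial with only `d`-divisible factors annihilates a `d`-element on `V_x`, and
`V = V_x ⊕ V_x⁰`. -/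
theorem exists_annihilator_of_mem_dElements (hx : x ∈ dElements F V d) :
    ∃ A : F[X], (∀ f : F[X], f.Monic → Irreducible f → f ∣ A → IsDFactor d f) ∧
      (∀ v ∈ primaryRange x, aeval (x : Module.End F V) A v = 0) ∧
      IsCompl (primaryRange x) (primaryKer x) := by
  set φ : Module.End F V := (x : Module.End F V) with hφ
  obtain ⟨A, hA, hndvd⟩ := φ.charpoly.exists_eq_pow_rootMultiplicity_mul_and_not_dvd
    φ.charpoly_monic.ne_zero 1
  set k := φ.charpoly.rootMultiplicity 1
  have hk : k ≤ Module.finrank F V := by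
    have hdvd : (X - C (1 : F)) ^ k ∣ φ.charpoly := ⟨A, hA⟩
    have := natDegree_le_of_dvd hdvd φ.charpoly_monic.ne_zero
    rwa [natDegree_pow, natDegree_X_sub_C, mul_one, φ.charpoly_natDegree] at this
  obtain ⟨m, hm⟩ := Nat.exists_eq_add_of_le hk
  have hpow : aeval φ ((X - C (1 : F)) ^ Module.finrank F V) = (φ - 1) ^ Module.finrank F V := by
    simp
  have hzero : aeval φ (A * (X - C (1 : F)) ^ Module.finrank F V) = 0 := by
    have : A * (X - C (1 : F)) ^ Module.finrank F V = φ.charpoly * (X - C (1 : F)) ^ m := by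
      rw [hA, hm, pow_add]; ring
    rw [this, map_mul, φ.aeval_self_charpoly, zero_mul]
  have hcop : IsCoprime A ((X - C (1 : F)) ^ Module.finrank F V) :=
    (((irreducible_X_sub_C (1 : F)).coprime_iff_not_dvd.2 hndvd).pow_left).symm
  have hker : primaryKer x = LinearMap.ker (aeval φ ((X - C (1 : F)) ^ Module.finrank F V)) := by
    rw [hpow]; rfl
  have hrange : primaryRange x ≤ LinearMap.ker (aeval φ A) := by
    rintro _ ⟨v, rfl⟩
    rw [LinearMap.mem_ker, ← hφ, ← hpow, ← Module.End.mul_apply, ← map_mul, hzero,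
      LinearMap.zero_apply]
  refine ⟨A, fun f hm hf hd => ?_, fun v hv => hrange hv, ?_, ?_⟩
  · have hne : f ≠ X - 1 := by
      rintro rfl
      exact hndvd (by simpa using hd)
    exact ⟨hne, hx.2 f hm hf (hA ▸ hd.mul_left _) hne⟩
  · rw [hker]
    exact (disjoint_ker_aeval_of_isCoprime φ hcop).mono_left hrange
  · obtain ⟨a, b, hab⟩ := hcop
    rw [codisjoint_iff, eq_top_iff]
    intro v _
    refine Submodule.mem_sup.2 ⟨aeval φ (b * (X - C (1 : F)) ^ Module.finrank F V) v, ?_,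
      aeval φ (a * A) v, ?_, ?_⟩
    · rw [mul_comm, map_mul, hpow]
      exact ⟨_, rfl⟩
    · rw [hker, LinearMap.mem_ker, ← Module.End.mul_apply, ← map_mul]
      have : (X - C (1 : F)) ^ Module.finrank F V * (a * A) =
        a * (A * (X - C (1 : F)) ^ Module.finrank F V) := by ring
      rw [this, map_mul, hzero, mul_zero, LinearMap.zero_apply]
    · rw [← LinearMap.add_apply, ← map_add, add_comm, hab, map_one, Module.End.one_apply]

/-- On `V_x` the product `xy` acts as `x`. -/
theorem mul_apply_of_mem_primaryRange (hy : y ∈ dRegular F V d x) {v : V}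
    (hv : v ∈ primaryRange x) :
    ((x * y : (Module.End F V)ˣ) : Module.End F V) v = (x : Module.End F V) v := by
  rw [Units.val_mul, Module.End.mul_apply, hy.1 v hv]

/-- On `V_x⁰` the product `xy` acts as `y`. -/
theorem mul_apply_of_mem_primaryKer (hx : x ∈ dElements F V d) (hy : y ∈ dRegular F V d x) {v : V}
    (hv : v ∈ primaryKer x) :
    ((x * y : (Module.End F V)ˣ) : Module.End F V) v = (y : Module.End F V) v := by
  rw [Units.val_mul, Module.End.mul_apply, hx.1 _ (hy.2.1 v hv)]

/-- The subspaces `V_x` and `V_x⁰` are annihilated by polynomials in `xy` with separated factors. -/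
theorem exists_annihilators_mul (hx : x ∈ dElements F V d) (hy : y ∈ dRegular F V d x) :
    ∃ A B : F[X], B ≠ 0 ∧ (∀ f : F[X], f.Monic → Irreducible f → f ∣ A → IsDFactor d f) ∧
      (∀ f : F[X], f.Monic → Irreducible f → f ∣ B → ¬ IsDFactor d f) ∧
      (∀ v ∈ primaryRange x,
        aeval ((x * y : (Module.End F V)ˣ) : Module.End F V) A v = 0) ∧
      (∀ v ∈ primaryKer x, aeval ((x * y : (Module.End F V)ˣ) : Module.End F V) B v = 0) := by
  obtain ⟨A, hA, hAv, -⟩ := exists_annihilator_of_mem_dElements hx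
  refine ⟨A, (y : Module.End F V).charpoly, (LinearMap.charpoly_monic _).ne_zero, hA,
    fun f hm hf hd hS => hy.2.2 f hm hf hd hS.1 hS.2, fun v hv => ?_, fun v hv => ?_⟩
  · rw [Module.End.aeval_apply_eq_of_eqOn (U := primaryRange x) (ψ := (x : Module.End F V)) _
      (fun u hu => mul_apply_of_mem_primaryRange hy hu) A hv]
    · exact hAv v hv
    · intro u hu
      rw [mul_apply_of_mem_primaryRange hy hu]
      exact apply_mem_primaryRange hu
  · rw [Module.End.aeval_apply_eq_of_eqOn (U := primaryKer x) (ψ := (y : Module.End F V)) _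
      (fun u hu => mul_apply_of_mem_primaryKer hx hy hu) _ hv]
    · rw [LinearMap.aeval_self_charpoly, LinearMap.zero_apply]
    · intro u hu
      rw [mul_apply_of_mem_primaryKer hx hy hu]
      exact hy.2.1 u hu

/-- An endomorphism conjugating `xy` to `x'y'` maps `V_{x'}` into `V_x` and `V_{x'}⁰` into
`V_x⁰`. -/
theorem map_primary_le_of_conj {x' y' g : (Module.End F V)ˣ} (hx : x ∈ dElements F V d)
    (hy : y ∈ dRegular F V d x) (hx' : x' ∈ dElements F V d) (hy' : y' ∈ dRegular F V d x')
    (hg : (x * y) * g = g * (x' * y')) :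
    (∀ v ∈ primaryRange x', (g : Module.End F V) v ∈ primaryRange x) ∧
      (∀ v ∈ primaryKer x', (g : Module.End F V) v ∈ primaryKer x) := by
  obtain ⟨A, B, hB0, hA, hB, hAv, hBv⟩ := exists_annihilators_mul hx hy
  obtain ⟨A', B', hB0', hA', hB', hAv', hBv'⟩ := exists_annihilators_mul hx' hy'
  obtain ⟨-, -, -, hcompl⟩ := exists_annihilator_of_mem_dElements hx
  set φ : Module.End F V := ((x * y : (Module.End F V)ˣ) : Module.End F V) with hφ
  set φ' : Module.End F V := ((x' * y' : (Module.End F V)ˣ) : Module.End F V)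
  have hconj : ∀ w, φ ((g : Module.End F V) w) = (g : Module.End F V) (φ' w) := fun w =>
    congrArg (fun u : (Module.End F V)ˣ => (u : Module.End F V) w) hg
  have haeval (p : F[X]) (w : V) :
      aeval φ p ((g : Module.End F V) w) = (g : Module.End F V) (aeval φ' p w) :=
    aeval_apply_intertwine hconj p w
  have hU : ∀ u ∈ primaryRange x, φ u ∈ primaryRange x := fun u hu => by
    rw [hφ, mul_apply_of_mem_primaryRange hy hu]
    exact apply_mem_primaryRange hu
  have hU0 : ∀ u ∈ primaryKer x, φ u ∈ primaryKer x := fun u hu => by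
    rw [hφ, mul_apply_of_mem_primaryKer hx hy hu]
    exact hy.2.1 u hu
  have hcop : IsCoprime A' B := isCoprime_of_separated hB0 hA' hB
  have hcop' : IsCoprime A B' := isCoprime_of_separated hB0' hA hB'
  exact ⟨fun v hv => Module.End.mem_of_aeval_eq_zero hcompl hU hU0 hcop hBv
      (by rw [haeval, hAv' v hv, map_zero]),
    fun v hv => Module.End.mem_of_aeval_eq_zero hcompl.symm hU0 hU hcop'.symm hAv
      (by rw [haeval, hBv' v hv, map_zero])⟩

/-- An element conjugating `xy` to `x'y'` conjugates `x` to `x'`. -/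
theorem mul_eq_mul_of_conj {x' y' g : (Module.End F V)ˣ} (hx : x ∈ dElements F V d)
    (hy : y ∈ dRegular F V d x) (hx' : x' ∈ dElements F V d) (hy' : y' ∈ dRegular F V d x')
    (hg : (x * y) * g = g * (x' * y')) : x * g = g * x' := by
  obtain ⟨hR, hK⟩ := map_primary_le_of_conj hx hy hx' hy' hg
  obtain ⟨-, -, -, hcompl⟩ := exists_annihilator_of_mem_dElements hx'
  ext v
  obtain ⟨u, hu, w, hw, rfl⟩ := Submodule.mem_sup.1
    (hcompl.sup_eq_top.ge (Submodule.mem_top : v ∈ ⊤))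
  have hconj := congrArg (fun t : (Module.End F V)ˣ => (t : Module.End F V) u) hg
  have h1 : (x : Module.End F V) ((g : Module.End F V) u) =
      (g : Module.End F V) ((x' : Module.End F V) u) := by
    rw [← mul_apply_of_mem_primaryRange hy (hR u hu), ← mul_apply_of_mem_primaryRange hy' hu]
    exact hconj
  have h2 : (x : Module.End F V) ((g : Module.End F V) w) =
      (g : Module.End F V) ((x' : Module.End F V) w) := by
    rw [hx.1 _ (hK w hw), hx'.1 w hw]
  simp only [Units.val_mul, Module.End.mul_apply, map_add, h1, h2]

end Products

/-- Every invertible endomorphism is a product `xy` with `x ∈ 𝒳_d` and `y ∈ 𝒴_d(x)`. -/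
theorem exists_dElements_mul_dRegular {F V : Type} [Field F] [AddCommGroup V] [Module F V]
    [FiniteDimensional F V] (hn : 1 ≤ Module.finrank F V) (d : ℕ) (g : (Module.End F V)ˣ) :
    ∃ x ∈ dElements F V d, ∃ y ∈ dRegular F V d x, x * y = g := by
  set n := Module.finrank F V
  set γ : Module.End F V := (g : Module.End F V)
  obtain ⟨P, Q, hPQ, hP, hQ⟩ := exists_mul_eq_separated (IsDFactor d) γ.charpoly
    γ.charpoly_monic.ne_zero
  have hQ0 : Q ≠ 0 := by
    rintro rfl
    exact γ.charpoly_monic.ne_zero (by rw [hPQ, mul_zero])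
  have hzero : aeval γ (P * Q) = 0 := by rw [← hPQ, γ.aeval_self_charpoly]
  obtain ⟨a, b, hab⟩ := isCoprime_of_separated hQ0 hP hQ
  set e : Module.End F V := aeval γ (b * Q) with he
  have heP : e * aeval γ P = 0 := by
    rw [he, ← map_mul, show b * Q * P = b * (P * Q) by ring, map_mul, hzero, mul_zero]
  have hPe : aeval γ P * e = 0 := by
    rw [he, ← map_mul, show P * (b * Q) = b * (P * Q) by ring, map_mul, hzero, mul_zero]
  have hcomp : 1 - e = aeval γ (a * P) := by
    rw [he, ← map_one (aeval γ : F[X] →ₐ[F] Module.End F V), ← hab, map_add, add_sub_cancel_right]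
  have heQ : (1 - e) * aeval γ Q = 0 := by
    rw [hcomp, ← map_mul, mul_assoc, map_mul, hzero, mul_zero]
  have hee : e * e = e := by
    have h : (1 - e) * e = 0 := by rw [hcomp, map_mul, mul_assoc, hPe, mul_zero]
    rw [sub_mul, one_mul, sub_eq_zero] at h
    exact h.symm
  have hγe : γ * e = e * γ := by
    have h : Commute (aeval γ X) (aeval γ (b * Q)) := (Commute.all X (b * Q)).map (aeval γ)
    rwa [aeval_X] at h
  have hγe' : γ * (1 - e) = (1 - e) * γ := by rw [mul_sub, sub_mul, hγe, mul_one, one_mul]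
  have hee0 : e * (1 - e) = 0 := by rw [mul_sub, mul_one, hee, sub_self]
  have hee1 : (1 - e) * e = 0 := by rw [sub_mul, one_mul, hee, sub_self]
  have hee' : (1 - e) * (1 - e) = 1 - e := by rw [sub_mul, one_mul, hee0, sub_zero]
  set ξ : Module.End F V := γ * e + (1 - e) with hξ
  set η : Module.End F V := e + γ * (1 - e) with hη
  have hξe : ξ * e = e * γ := by rw [hξ, add_mul, mul_assoc, hee, hee1, add_zero, hγe]
  have hξe' : ξ * (1 - e) = 1 - e := by rw [hξ, add_mul, mul_assoc, hee0, mul_zero, zero_add, hee']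
  have hηe : η * e = e := by rw [hη, add_mul, mul_assoc, hee1, mul_zero, add_zero, hee]
  have hηe' : η * (1 - e) = (1 - e) * γ := by
    rw [hη, add_mul, mul_assoc, hee0, hee', zero_add, hγe']
  have hξη : ξ * η = γ := by
    rw [hη, hγe', mul_add, ← mul_assoc, hξe, hξe', ← add_mul, add_sub_cancel, one_mul]
  have hηξ : η * ξ = γ := by
    rw [hξ, hγe, mul_add, ← mul_assoc, hηe, hηe', ← add_mul, add_sub_cancel, one_mul]
  have hcomm : Commute ξ η := hξη.trans hηξ.symm
  obtain ⟨hux, huy⟩ := hcomm.isUnit_mul_iff.1 (hξη ▸ g.isUnit)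
  have hγc : Commute γ e := hγe
  have hξ1 : ξ - 1 = (γ - 1) * e := by rw [hξ]; noncomm_ring
  have hξpow : (ξ - 1) ^ n = (γ - 1) ^ n * e := by
    rw [hξ1, (hγc.sub_left (Commute.one_left e)).mul_pow, IsIdempotentElem.pow_eq hee (by omega)]
  have hcop : IsCoprime P ((X - C (1 : F)) ^ n) := by
    refine (((irreducible_X_sub_C (1 : F)).coprime_iff_not_dvd.2 fun h => ?_).pow_left).symm
    exact (hP _ (monic_X_sub_C 1) (irreducible_X_sub_C 1) h).1 (by simp)
  have hXP : aeval ξ (P * (X - 1)) = 0 := by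
    have h : ξ - 1 = e * (γ - 1) := by rw [hξ, hγe]; noncomm_ring
    ext v
    simp only [map_mul, map_sub, aeval_X, map_one, h, Module.End.mul_apply]
    rw [aeval_apply_intertwine (LinearMap.congr_fun hξe)]
    exact LinearMap.congr_fun heP _
  have hXQ : aeval η (Q * (X - 1)) = 0 := by
    have h : η - 1 = (1 - e) * (γ - 1) := by rw [hη, hγe']; noncomm_ring
    ext v
    simp only [map_mul, map_sub, aeval_X, map_one, h, Module.End.mul_apply]
    rw [aeval_apply_intertwine (LinearMap.congr_fun hηe')]
    exact LinearMap.congr_fun heQ _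
  have hlin : ∀ f : F[X], f.Monic → Irreducible f → f ∣ X - 1 → f = X - 1 := fun f hm hf h => by
    have h1 : Irreducible (X - 1 : F[X]) := by simpa using irreducible_X_sub_C (1 : F)
    have hm1 : (X - 1 : F[X]).Monic := by simpa using monic_X_sub_C (1 : F)
    exact eq_of_monic_of_associated hm hm1 (hf.associated_of_dvd h1 h)
  refine ⟨hux.unit, ⟨?_, ?_⟩, huy.unit, ⟨?_, ?_, ?_⟩, Units.ext hξη⟩
  · intro v hv
    have hev : aeval γ ((X - C (1 : F)) ^ n) (e v) = 0 := by
      have h : ((ξ - 1) ^ n) v = 0 := hv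
      rw [hξpow] at h
      simpa using h
    have hPv : aeval γ P (e v) = 0 := LinearMap.congr_fun hPe v
    have hev0 : e v = 0 := by
      have := (disjoint_ker_aeval_of_isCoprime γ hcop).le_bot ⟨hPv, hev⟩
      simpa using this
    show ξ v = v
    simp [hξ, hev0]
  · intro f hm hf hd hne
    rcases hf.prime.dvd_or_dvd (LinearMap.dvd_of_irreducible_of_dvd_charpoly hf hd hXP) with h | h
    · exact (hP f hm hf h).2
    · exact absurd (hlin f hm hf h) hne
  · rintro _ ⟨v, rfl⟩
    show η (((ξ - 1) ^ n) v) = ((ξ - 1) ^ n) v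
    have hc : (γ - 1) ^ n * e = e * (γ - 1) ^ n := ((hγc.sub_left (Commute.one_left e)).pow_left n)
    rw [hξpow, hc, ← Module.End.mul_apply, ← mul_assoc, hηe]
  · intro v hv
    have h : ((ξ - 1) ^ n) v = 0 := hv
    show ((ξ - 1) ^ n) (η v) = 0
    have hc : (ξ - 1) ^ n * η = η * (ξ - 1) ^ n :=
      (hcomm.sub_left (Commute.one_left η)).pow_left n
    rw [← Module.End.mul_apply, hc, Module.End.mul_apply, h, map_zero]
  · intro f hm hf hd hne hdvd
    rcases hf.prime.dvd_or_dvd (LinearMap.dvd_of_irreducible_of_dvd_charpoly hf hd hXQ) with h | h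
    · exact hQ f hm hf h ⟨hne, hdvd⟩
    · exact absurd (hlin f hm hf h) hne

/-- For `d ≥ 1`, `x, x′ ∈ 𝒳_d`, `y ∈ 𝒴_d(x)`, `y′ ∈ 𝒴_d(x′)`:
`xy` and `x′y′` are conjugate in `G = GL(V)` iff some `g ∈ G` simultaneously
conjugates `x` to `x′` and `y` to `y′`. Consequently `G` is the disjoint union,
over representatives `x` of the `G`-classes in `𝒳_d` and representatives `y` of
the `C_G(x)`-classes in `𝒴_d(x)`, of the `G`-conjugacy classes of the `xy`; in
particular every `g ∈ G` is conjugate to some such product `x₀ y₀`. -/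
theorem sections_partition
    (F V : Type) [Field F] [Fintype F] [AddCommGroup V] [Module F V]
    [FiniteDimensional F V] (hn : 1 ≤ Module.finrank F V)
    (d : ℕ) (hd : 1 ≤ d)
    (x x' : (Module.End F V)ˣ)
    (hx : x ∈ dElements F V d) (hx' : x' ∈ dElements F V d)
    (y y' : (Module.End F V)ˣ)
    (hy : y ∈ dRegular F V d x) (hy' : y' ∈ dRegular F V d x') :
    ((∃ g : (Module.End F V)ˣ, g⁻¹ * (x * y) * g = x' * y') ↔
      ∃ g : (Module.End F V)ˣ, g⁻¹ * x * g = x' ∧ g⁻¹ * y * g = y') ∧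
    ∀ g : (Module.End F V)ˣ, ∃ x₀ ∈ dElements F V d, ∃ y₀ ∈ dRegular F V d x₀,
      ∃ h : (Module.End F V)ˣ, h⁻¹ * (x₀ * y₀) * h = g := by
  refine ⟨⟨fun ⟨g, hg⟩ => ⟨g, ?_⟩, fun ⟨g, hgx, hgy⟩ => ⟨g, ?_⟩⟩, fun g => ?_⟩
  · have hg' : (x * y) * g = g * (x' * y') := by rw [← hg]; group
    have h1 : g⁻¹ * x * g = x' := by
      rw [mul_assoc, mul_eq_mul_of_conj hx hy hx' hy' hg', inv_mul_cancel_left]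
    refine ⟨h1, mul_left_cancel (a := x') ?_⟩
    rw [← hg, ← h1]
    group
  · rw [← hgx, ← hgy]
    group
  · obtain ⟨x₀, hx₀, y₀, hy₀, h⟩ := exists_dElements_mul_dRegular hn d g
    exact ⟨x₀, hx₀, y₀, hy₀, 1, by simpa using h⟩
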